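/- Let p be an odd prime, r ≥ 1 an integer, and K an abelian number field of conductor p^r, of degree n over ℚ and with D_K the absolute value of the discriminant of K. Then M(K) ≤ (1/3)^n · D_K. -/

import Mathlib

open NumberField

/-- The Euclidean minimum of a number field `K`:
`M(K) = sup_{x ∈ K} inf_{c ∈ O_K} |N_{K/ℚ}(x − c)|`. -/
noncomputable def euclideanMinimum (K : Type*) [Field K] [NumberField K] : ℝ :=
  ⨆ x : K, ⨅ c : 𝓞 K, |((Algebra.norm ℚ (x - (c : K)) : ℚ) : ℝ)|

/-- A number field `K` has conductor `f` if `f` is the smallest positive integer such that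
`K` embeds into the `f`-th cyclotomic field `ℚ(ζ_f)`.  (Such a `K` is automatically an
abelian extension of `ℚ`.) -/
def HasConductor (K : Type*) [Field K] [NumberField K] (f : ℕ+) : Prop :=
  Nonempty (K →ₐ[ℚ] CyclotomicField f ℚ) ∧
    ∀ m : ℕ+, Nonempty (K →ₐ[ℚ] CyclotomicField m ℚ) → f ≤ m

/-!
Embed `K` in `L = ℚ(ζ)` with `ζ` of order `N = p ^ r`, and write `x ∈ K` as `∑ y i * ζ ^ i` with `i`
ranging over `ZMod N` and rational coefficients `y` that are invariant under `Gal(L/K)`. Since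
`∑ ζ ^ i = 0`, all `y i` may be shifted by a common `t` before being rounded, and the rounded
coefficients define an element `c` of `𝓞 K`. Averaging over `t` and applying Parseval, some `t`
gives `∑ |τ (x - c)| ^ 2 ≤ (N ^ 2 - 1) / 12`, the sum being over the embeddings `τ` of `L`. By the
inequality of arithmetic and geometric means, `M(K) ^ 2 ≤ ((N ^ 2 - 1) / (12 [L : ℚ])) ^ n`.

To compare this with the discriminant, note that minimality of the conductor forces `p ∤ [L : K]`:
otherwise an element of order `p` in `Gal(L/K)` would confine `K` to `ℚ(ζ ^ p)`. Hence `L / K` is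
tamely ramified, the different divides `∏ (ζ - σ ζ)` over `σ ≠ 1` in `Gal(L/K)`, which has norm
`p ^ ([L : K] - 1)` up to sign, and the tower formula for discriminants bounds `D_K` from below.
-/

section Circle

open MeasureTheory

theorem integral_norm_sq_unitAddCircle : ∫ t : UnitAddCircle, ‖t‖ ^ 2 = 1 / 12 := by
  have hnorm : ∀ t ∈ Set.uIcc (-1 / 2 : ℝ) (-1 / 2 + 1), ‖(t : UnitAddCircle)‖ ^ 2 = t ^ 2 := by
    intro t ht
    rw [Set.uIcc_of_le (by norm_num), Set.mem_Icc] at ht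
    rw [(AddCircle.norm_coe_eq_abs_iff 1 one_ne_zero).2, sq_abs]
    rw [abs_one, abs_le]
    constructor <;> linarith
  rw [← UnitAddCircle.intervalIntegral_preimage (-1 / 2), intervalIntegral.integral_congr hnorm,
    integral_pow]
  norm_num

theorem integral_norm_sq_zsmul_add {n : ℤ} (hn : n ≠ 0) (c : UnitAddCircle) :
    ∫ t : UnitAddCircle, ‖n • t + c‖ ^ 2 = 1 / 12 := by
  have hmp := (measurePreserving_add_right volume c).comp
    (Measure.measurePreserving_zsmul (volume : Measure UnitAddCircle) hn)
  calc ∫ t : UnitAddCircle, ‖n • t + c‖ ^ 2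
      = ∫ s, ‖s‖ ^ 2 ∂(volume.map fun t : UnitAddCircle ↦ n • t + c) :=
        (integral_map hmp.aemeasurable (continuous_norm.pow 2).aestronglyMeasurable).symm
    _ = ∫ s : UnitAddCircle, ‖s‖ ^ 2 := congrArg (∫ s, ‖s‖ ^ 2 ∂·) hmp.map_eq
    _ = 1 / 12 := integral_norm_sq_unitAddCircle

-- Averaging over `t`: the points `x i + t` and `∑ i, (x i + t)` are all equidistributed on the
-- circle, so every squared norm has mean `1 / 12`.
theorem exists_card_mul_sum_norm_sq_sub_le {ι : Type*} [Fintype ι] [Nonempty ι]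
    (x : ι → UnitAddCircle) :
    ∃ t : UnitAddCircle, (Fintype.card ι : ℝ) * ∑ i, ‖x i + t‖ ^ 2
      - ‖∑ i, (x i + t)‖ ^ 2 ≤ ((Fintype.card ι : ℝ) ^ 2 - 1) / 12 := by
  have hsum : ∀ t : UnitAddCircle, ∑ i, (x i + t) = (Fintype.card ι : ℤ) • t + ∑ i, x i := by
    intro t
    rw [Finset.sum_add_distrib, Finset.sum_const, Finset.card_univ, natCast_zsmul, add_comm]
  have hnorm_sq (f : UnitAddCircle → UnitAddCircle) (hf : Continuous f) :
      Integrable fun t ↦ ‖f t‖ ^ 2 :=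
    (hf.norm.pow 2).integrable_of_hasCompactSupport (HasCompactSupport.of_compactSpace _)
  have hleft : Integrable fun t ↦ (Fintype.card ι : ℝ) * ∑ i, ‖x i + t‖ ^ 2 :=
    (integrable_finsetSum _ fun i _ ↦ hnorm_sq _ (by fun_prop)).const_mul _
  have hright : Integrable fun t ↦ ‖∑ i, (x i + t)‖ ^ 2 := hnorm_sq _ (by fun_prop)
  have htranslate (i : ι) : ∫ t, ‖x i + t‖ ^ 2 = 1 / 12 := by
    simpa only [one_zsmul, add_comm] using integral_norm_sq_zsmul_add one_ne_zero (x i)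
  have hmean : ∫ t, ((Fintype.card ι : ℝ) * ∑ i, ‖x i + t‖ ^ 2 - ‖∑ i, (x i + t)‖ ^ 2)
      = ((Fintype.card ι : ℝ) ^ 2 - 1) / 12 := by
    rw [integral_sub hleft hright, integral_const_mul,
      integral_finsetSum _ fun i _ ↦ hnorm_sq _ (by fun_prop)]
    simp only [htranslate, hsum, integral_norm_sq_zsmul_add
      (Nat.cast_ne_zero.2 Fintype.card_ne_zero : (Fintype.card ι : ℤ) ≠ 0), Finset.sum_const,
      Finset.card_univ, nsmul_eq_mul]
    ring
  have : IsProbabilityMeasure (volume : Measure UnitAddCircle) :=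
    ⟨by rw [AddCircle.measure_univ, ENNReal.ofReal_one]⟩
  rw [← hmean]
  exact exists_le_integral (hleft.sub hright)

theorem exists_card_mul_sum_sq_sub_round_le {ι : Type*} [Fintype ι] [Nonempty ι] (x : ι → ℝ) :
    ∃ t : ℝ, (Fintype.card ι : ℝ) * ∑ i, (x i + t - round (x i + t)) ^ 2
      - (∑ i, (x i + t - round (x i + t))) ^ 2 ≤ ((Fintype.card ι : ℝ) ^ 2 - 1) / 12 := by
  obtain ⟨s, hs⟩ := exists_card_mul_sum_norm_sq_sub_le fun i ↦ (x i : UnitAddCircle)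
  obtain ⟨t, rfl⟩ := QuotientAddGroup.mk_surjective s
  have hround (y : ℝ) : ((y - round y : ℝ) : UnitAddCircle) = y := by
    rw [AddCircle.coe_sub, sub_eq_self, AddCircle.coe_eq_zero_iff]
    exact ⟨round y, by rw [zsmul_one]⟩
  have hsum : ((∑ i, (x i + t - round (x i + t)) : ℝ) : UnitAddCircle)
      = ∑ i, ((x i : UnitAddCircle) + t) :=
    (map_sum (QuotientAddGroup.mk' (AddSubgroup.zmultiples (1 : ℝ))) _ _).trans
      (Finset.sum_congr rfl fun i _ ↦ hround (x i + t))
  refine ⟨t, le_trans (sub_le_sub (le_of_eq ?_) ?_) hs⟩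
  · congr! 2 with i
    rw [← sq_abs, ← UnitAddCircle.norm_eq, AddCircle.coe_add]
  · rw [← hsum, ← sq_abs (∑ i, _)]
    gcongr
    exact QuotientAddGroup.norm_mk_le_norm

end Circle

section Embeddings

theorem sum_addChar_norm_sq_sum_mul {G : Type*} [AddCommGroup G] [Fintype G] (z : G → ℂ) :
    ∑ ψ : AddChar G ℂ, ‖∑ g, z g * ψ g‖ ^ 2 = Fintype.card G * ∑ g, ‖z g‖ ^ 2 := by
  classical
  have hexpand (ψ : AddChar G ℂ) : ((‖∑ g, z g * ψ g‖ ^ 2 : ℝ) : ℂ)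
      = ∑ g, ∑ h, z g * (starRingEnd ℂ) (z h) * ψ (g - h) := by
    push_cast
    rw [← Complex.mul_conj', map_sum, Finset.sum_mul_sum]
    congr! 2 with g _ h _
    rw [map_mul, sub_eq_add_neg, AddChar.map_add_eq_mul, AddChar.map_neg_eq_conj]
    ring
  have hcomplex : ((∑ ψ : AddChar G ℂ, ‖∑ g, z g * ψ g‖ ^ 2 : ℝ) : ℂ)
      = ((Fintype.card G * ∑ g, ‖z g‖ ^ 2 : ℝ) : ℂ) := calc
    _ = ∑ ψ : AddChar G ℂ, ∑ g, ∑ h, z g * (starRingEnd ℂ) (z h) * ψ (g - h) := by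
      rw [Complex.ofReal_sum, Finset.sum_congr rfl fun ψ _ ↦ hexpand ψ]
    _ = ∑ g, ∑ h, z g * (starRingEnd ℂ) (z h) * ∑ ψ : AddChar G ℂ, ψ (g - h) := by
      rw [Finset.sum_comm]
      congr! 1 with g
      rw [Finset.sum_comm]
      congr! 1 with h
      rw [Finset.mul_sum]
    _ = ∑ g, z g * (starRingEnd ℂ) (z g) * Fintype.card G := by
      simp only [AddChar.sum_apply_eq_ite, sub_eq_zero, mul_ite, mul_zero, Finset.sum_ite_eq,
        Finset.mem_univ, if_true]
    _ = _ := by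
      push_cast
      rw [← Finset.sum_mul, mul_comm]
      simp only [Complex.mul_conj']
  exact_mod_cast hcomplex

theorem prod_le_sum_div_card_pow_card {ι : Type*} [Fintype ι] {w : ι → ℝ}
    (hw : ∀ i, 0 ≤ w i) : ∏ i, w i ≤ ((∑ i, w i) / Fintype.card ι) ^ Fintype.card ι := by
  cases isEmpty_or_nonempty ι with
  | inl _ => simp
  | inr _ =>
  have hmean := Real.geom_mean_le_arith_mean Finset.univ (fun _ ↦ 1) w (fun _ _ ↦ zero_le_one)
    (by simp [Fintype.card_pos]) (fun i _ ↦ hw i)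
  simp only [Real.rpow_one, one_mul, Finset.sum_const, nsmul_eq_mul, mul_one,
    Finset.card_univ] at hmean
  have hprod : 0 ≤ ∏ i, w i := Finset.prod_nonneg fun i _ ↦ hw i
  simpa only [Real.rpow_inv_natCast_pow hprod Fintype.card_ne_zero] using
    pow_le_pow_left₀ (Real.rpow_nonneg hprod _) hmean (Fintype.card ι)

theorem sq_abs_norm_le_sum_norm_sq_div_finrank_pow {L : Type*} [Field L] [NumberField L] (y : L) :
    |((Algebra.norm ℚ y : ℚ) : ℝ)| ^ 2
      ≤ ((∑ τ : L →ₐ[ℚ] ℂ, ‖τ y‖ ^ 2) / Module.finrank ℚ L) ^ Module.finrank ℚ L := by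
  have hprod : |((Algebra.norm ℚ y : ℚ) : ℝ)| = ∏ τ : L →ₐ[ℚ] ℂ, ‖τ y‖ := by
    rw [← norm_prod, ← Algebra.norm_eq_prod_embeddings ℚ ℂ y, eq_ratCast, Complex.norm_ratCast]
  rw [hprod, ← Finset.prod_pow, ← AlgHom.card ℚ L ℂ]
  exact prod_le_sum_div_card_pow_card fun τ ↦ by positivity

theorem zmodChar_ne_zero {R : Type*} [CommMonoid R] {N : ℕ} [NeZero N] (hN : 1 < N) {ζ : R}
    (hζ : IsPrimitiveRoot ζ N) : AddChar.zmodChar N hζ.pow_eq_one ≠ 0 := by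
  have : Fact (1 < N) := ⟨hN⟩
  intro h
  apply hζ.ne_one hN
  simpa [AddChar.zmodChar_apply, ZMod.val_one] using DFunLike.congr_fun h 1

theorem sum_pow_val_eq_zero {R : Type*} [CommRing R] [IsDomain R] {N : ℕ} [NeZero N] (hN : 1 < N)
    {ζ : R} (hζ : IsPrimitiveRoot ζ N) : ∑ i : ZMod N, ζ ^ i.val = 0 := by
  simpa only [AddChar.zmodChar_apply] using
    AddChar.sum_eq_zero_of_ne_one (zmodChar_ne_zero hN hζ)

-- Parseval on `ZMod N`: distinct embeddings give distinct nontrivial characters `i ↦ τ (ζ ^ i)`,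
-- and the subtracted term is the contribution of the trivial character.
theorem sum_norm_sq_embeddings_le {L : Type*} [Field L] [NumberField L] {N : ℕ} [NeZero N]
    [IsCyclotomicExtension {N} ℚ L] (hN : 1 < N) {ζ : L} (hζ : IsPrimitiveRoot ζ N)
    (z : ZMod N → ℂ) :
    ∑ τ : L →ₐ[ℚ] ℂ, ‖∑ i, z i * τ (ζ ^ i.val)‖ ^ 2
      ≤ N * ∑ i, ‖z i‖ ^ 2 - ‖∑ i, z i‖ ^ 2 := by
  classical
  have : Fact (1 < N) := ⟨hN⟩
  have hroot (τ : L →ₐ[ℚ] ℂ) : IsPrimitiveRoot (τ ζ) N := hζ.map_of_injective τ.injective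
  let χ (τ : L →ₐ[ℚ] ℂ) : AddChar (ZMod N) ℂ := AddChar.zmodChar N (hroot τ).pow_eq_one
  have hχ (τ : L →ₐ[ℚ] ℂ) (i : ZMod N) : χ τ i = τ (ζ ^ i.val) := by
    rw [AddChar.zmodChar_apply, map_pow]
  have hχ_inj : Function.Injective χ := fun τ₁ τ₂ h ↦ (hζ.powerBasis ℚ).algHom_ext <| by
    simpa only [hχ, ZMod.val_one, pow_one, IsPrimitiveRoot.powerBasis_gen] using
      DFunLike.congr_fun h 1
  have htrivial : (0 : AddChar (ZMod N) ℂ) ∉ Finset.univ.image χ := by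
    simpa only [Finset.mem_image, Finset.mem_univ, true_and, not_exists] using
      fun τ ↦ zmodChar_ne_zero hN (hroot τ)
  rw [le_sub_iff_add_le']
  calc ‖∑ i, z i‖ ^ 2 + ∑ τ : L →ₐ[ℚ] ℂ, ‖∑ i, z i * τ (ζ ^ i.val)‖ ^ 2
      = ∑ ψ ∈ insert 0 (Finset.univ.image χ), ‖∑ i, z i * ψ i‖ ^ 2 := by
        rw [Finset.sum_insert htrivial, Finset.sum_image hχ_inj.injOn]
        simp only [hχ, AddChar.zero_apply, mul_one]
    _ ≤ ∑ ψ : AddChar (ZMod N) ℂ, ‖∑ i, z i * ψ i‖ ^ 2 :=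
        Finset.sum_le_sum_of_subset_of_nonneg (Finset.subset_univ _) fun _ _ _ ↦ sq_nonneg _
    _ = N * ∑ i, ‖z i‖ ^ 2 := by rw [sum_addChar_norm_sq_sum_mul, ZMod.card]

end Embeddings

section Descent

theorem isCyclotomicExtension_of_isScalarTower (S : Set ℕ) (A B C : Type*) [CommRing A]
    [CommRing B] [CommRing C] [Algebra A B] [Algebra B C] [Algebra A C] [IsScalarTower A B C]
    [IsCyclotomicExtension S A C] : IsCyclotomicExtension S B C where
  exists_isPrimitiveRoot := IsCyclotomicExtension.exists_isPrimitiveRoot A C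
  adjoin_roots x := by
    have hle : Algebra.adjoin A {b : C | ∃ n ∈ S, n ≠ 0 ∧ b ^ n = 1}
        ≤ (Algebra.adjoin B {b : C | ∃ n ∈ S, n ≠ 0 ∧ b ^ n = 1}).restrictScalars A :=
      Algebra.adjoin_le Algebra.subset_adjoin
    exact hle (IsCyclotomicExtension.adjoin_roots x)

theorem exists_sum_smul_pow_val_eq (A : Type*) {B : Type*} [CommRing A] [CommRing B] [IsDomain B]
    [Algebra A B] {N : ℕ} [NeZero N] [IsCyclotomicExtension {N} A B] {ζ : B}
    (hζ : IsPrimitiveRoot ζ N) (u : B) : ∃ y : ZMod N → A, ∑ i, y i • ζ ^ i.val = u := by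
  rw [← Submodule.mem_span_range_iff_exists_fun]
  have hu : u ∈ Submodule.span A (Submonoid.closure {ζ} : Set B) := by
    rw [← Algebra.adjoin_eq_span, IsCyclotomicExtension.adjoin_primitive_root_eq_top hζ]
    exact Submodule.mem_top
  refine Submodule.span_mono ?_ hu
  intro w hw
  obtain ⟨j, rfl⟩ := Submonoid.mem_closure_singleton.1 hw
  exact ⟨j, (congrArg (ζ ^ ·) (ZMod.val_natCast N j)).trans (pow_eq_pow_mod j hζ.pow_eq_one).symm⟩

variable {K L : Type*} [Field K] [Field L] [Algebra K L] {N : ℕ} [NeZero N] {ζ : L}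

theorem aut_pow_val (hζ : IsPrimitiveRoot ζ N) (σ : Gal(L/K)) (i : ZMod N) :
    σ (ζ ^ i.val) = ζ ^ ((hζ.autToPow K σ : ZMod N) * i).val := by
  rw [map_pow, ← hζ.autToPow_spec K σ, ← pow_mul, ZMod.val_mul, ← pow_eq_pow_mod _ hζ.pow_eq_one]

theorem sum_autToPow_mul (hζ : IsPrimitiveRoot ζ N) (σ : Gal(L/K)) (g : ZMod N → L) :
    ∑ i, g ((hζ.autToPow K σ : ZMod N) * i) = ∑ i, g i :=
  Equiv.sum_comp (Units.mulLeft (hζ.autToPow K σ)) g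

-- The powers of `ζ` are linearly dependent, so the coefficients of `x` need not be Galois
-- invariant; averaging them over the Galois group makes them so. Rounding then preserves the
-- invariance.
theorem exists_autToPow_invariant_sum_smul_pow_val_eq [FiniteDimensional K L] [CharZero L]
    [IsCyclotomicExtension {N} ℚ L] (hζ : IsPrimitiveRoot ζ N) (x : K) :
    ∃ y : ZMod N → ℚ, (∀ (σ : Gal(L/K)) i, y ((hζ.autToPow K σ : ZMod N) * i) = y i) ∧
      ∑ i, y i • ζ ^ i.val = algebraMap K L x := by
  obtain ⟨y, hy⟩ := exists_sum_smul_pow_val_eq ℚ hζ (algebraMap K L x)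
  have htwist (σ : Gal(L/K)) :
      ∑ i, y ((hζ.autToPow K σ : ZMod N) * i) • ζ ^ i.val = algebraMap K L x := by
    apply σ.injective
    rw [σ.commutes, ← hy, map_sum, ← sum_autToPow_mul hζ σ fun i ↦ y i • ζ ^ i.val]
    simp only [map_rat_smul, aut_pow_val hζ]
  refine ⟨fun i ↦ (Fintype.card Gal(L/K) : ℚ)⁻¹ •
    ∑ σ : Gal(L/K), y ((hζ.autToPow K σ : ZMod N) * i), fun ρ i ↦ ?_, ?_⟩
  · simp only [← mul_assoc, ← Units.val_mul, ← map_mul]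
    congr 1
    exact Equiv.sum_comp (Equiv.mulRight ρ) fun σ ↦ y ((hζ.autToPow K σ : ZMod N) * i)
  · simp only [smul_assoc, Finset.sum_smul]
    rw [← Finset.smul_sum, Finset.sum_comm, Finset.sum_congr rfl fun σ _ ↦ htwist σ,
      Finset.sum_const, Finset.card_univ, ← Nat.cast_smul_eq_nsmul ℚ,
      inv_smul_smul₀ (Nat.cast_ne_zero.2 Fintype.card_ne_zero)]

theorem exists_ringOfIntegers_eq_sum_pow_val [IsGalois K L] [FiniteDimensional K L]
    (hζ : IsPrimitiveRoot ζ N) {c : ZMod N → ℤ}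
    (hc : ∀ (σ : Gal(L/K)) i, c ((hζ.autToPow K σ : ZMod N) * i) = c i) :
    ∃ b : 𝓞 K, algebraMap K L b = ∑ i, (c i : L) * ζ ^ i.val := by
  have hfixed (σ : Gal(L/K)) : σ (∑ i, (c i : L) * ζ ^ i.val) = ∑ i, (c i : L) * ζ ^ i.val := by
    rw [map_sum, ← sum_autToPow_mul hζ σ fun i ↦ (c i : L) * ζ ^ i.val]
    simp only [map_mul, map_intCast, aut_pow_val hζ, hc]
  obtain ⟨b, hb⟩ := (IsGalois.mem_range_algebraMap_iff_fixed _).2 hfixed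
  have hintegral : IsIntegral ℤ (algebraMap K L b) := hb ▸
    IsIntegral.sum _ fun i _ ↦ (isIntegral_algebraMap (x := c i)).mul
      ((hζ.isIntegral (NeZero.pos N)).pow _)
  exact ⟨⟨b, (isIntegral_algebraMap_iff (algebraMap K L).injective).1 hintegral⟩, hb⟩

end Descent

section Approximation

variable {K : Type*} [Field K] [NumberField K] (L : Type*) [Field L] [NumberField L] [Algebra K L]
  {N : ℕ} [IsCyclotomicExtension {N} ℚ L]

theorem exists_sum_norm_sq_embeddings_sub_le (hN : 1 < N) (x : K) :
    ∃ c : 𝓞 K, ∑ τ : L →ₐ[ℚ] ℂ, ‖τ (algebraMap K L (x - c))‖ ^ 2 ≤ ((N : ℝ) ^ 2 - 1) / 12 := by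
  have : NeZero N := ⟨by lia⟩
  have : IsCyclotomicExtension {N} K L := isCyclotomicExtension_of_isScalarTower {N} ℚ K L
  have : IsGalois K L := IsCyclotomicExtension.isGalois {N} K L
  have hζ := IsCyclotomicExtension.zeta_spec N ℚ L
  set ζ := IsCyclotomicExtension.zeta N ℚ L
  obtain ⟨y, hy_inv, hy⟩ := exists_autToPow_invariant_sum_smul_pow_val_eq hζ x
  obtain ⟨t, ht⟩ := exists_card_mul_sum_sq_sub_round_le fun i : ZMod N ↦ (y i : ℝ)
  rw [ZMod.card] at ht
  obtain ⟨c, hc⟩ := exists_ringOfIntegers_eq_sum_pow_val (K := K) hζ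
    (c := fun i ↦ round ((y i : ℝ) + t)) fun σ i ↦ by rw [hy_inv]
  refine ⟨c, le_trans (le_of_eq ?_) ((sum_norm_sq_embeddings_le hN hζ
    fun i ↦ ((y i + t - round (y i + t) : ℝ) : ℂ)).trans (le_trans (le_of_eq ?_) ht))⟩
  · congr! 3 with τ
    have hshift : ∑ i : ZMod N, (t : ℂ) * τ (ζ ^ i.val) = 0 := by
      rw [← Finset.mul_sum, ← map_sum, sum_pow_val_eq_zero hN hζ, map_zero, mul_zero]
    rw [map_sub, hc, ← hy, map_sub, map_sum, map_sum, ← Finset.sum_sub_distrib,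
      ← add_zero (∑ i, _), ← hshift, ← Finset.sum_add_distrib]
    congr! 1 with i
    rw [map_rat_smul, map_mul, map_intCast, Rat.smul_def]
    push_cast
    ring
  · rw [← Complex.ofReal_sum]
    simp only [Complex.norm_real, Real.norm_eq_abs, sq_abs]

theorem exists_sq_abs_norm_sub_le (hN : 1 < N) (x : K) :
    ∃ c : 𝓞 K, |((Algebra.norm ℚ (x - (c : K)) : ℚ) : ℝ)| ^ 2
      ≤ (((N : ℝ) ^ 2 - 1) / 12 / Module.finrank ℚ L) ^ Module.finrank ℚ K := by
  obtain ⟨c, hc⟩ := exists_sum_norm_sq_embeddings_sub_le L hN x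
  refine ⟨c, ?_⟩
  have hN' : (0 : ℝ) ≤ (N : ℝ) ^ 2 - 1 :=
    sub_nonneg.2 (one_le_pow₀ (by exact_mod_cast hN.le))
  have hnorm : Algebra.norm ℚ (algebraMap K L (x - c))
      = Algebra.norm ℚ (x - (c : K)) ^ Module.finrank K L := by
    rw [← Algebra.norm_norm (S := K), Algebra.norm_algebraMap, map_pow]
  refine le_of_pow_le_pow_left₀ (Module.finrank_pos (R := K) (M := L)).ne' (by positivity) ?_
  calc (|((Algebra.norm ℚ (x - (c : K)) : ℚ) : ℝ)| ^ 2) ^ Module.finrank K L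
      = |((Algebra.norm ℚ (algebraMap K L (x - c)) : ℚ) : ℝ)| ^ 2 := by
        rw [hnorm, Rat.cast_pow, abs_pow, pow_right_comm]
    _ ≤ ((∑ τ : L →ₐ[ℚ] ℂ, ‖τ (algebraMap K L (x - c))‖ ^ 2) / Module.finrank ℚ L)
          ^ Module.finrank ℚ L := sq_abs_norm_le_sum_norm_sq_div_finrank_pow _
    _ ≤ (((N : ℝ) ^ 2 - 1) / 12 / Module.finrank ℚ L) ^ Module.finrank ℚ L := by gcongr
    _ = ((((N : ℝ) ^ 2 - 1) / 12 / Module.finrank ℚ L) ^ Module.finrank ℚ K)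
          ^ Module.finrank K L := by rw [← pow_mul, Module.finrank_mul_finrank ℚ K L]

theorem euclideanMinimum_le_sqrt_of_isCyclotomicExtension (hN : 1 < N) :
    euclideanMinimum K
      ≤ √((((N : ℝ) ^ 2 - 1) / 12 / Module.finrank ℚ L) ^ Module.finrank ℚ K) := by
  refine ciSup_le fun x ↦ ?_
  obtain ⟨c, hc⟩ := exists_sq_abs_norm_sub_le L hN x
  exact (ciInf_le ⟨0, Set.forall_mem_range.2 fun _ ↦ abs_nonneg _⟩ c).trans
    (Real.le_sqrt_of_sq_le hc)

end Approximation

section Tame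

open IntermediateField

theorem modEq_pow_of_pow_modEq_pow_succ {p : ℕ} (hp : p.Prime) (hodd : Odd p) {k : ℕ} {a b : ℤ}
    (ha : ¬(p : ℤ) ∣ a) (h : a ^ p ≡ b ^ p [ZMOD p ^ (k + 1)]) : a ≡ b [ZMOD p ^ k] := by
  have : Fact p.Prime := ⟨hp⟩
  rw [Int.modEq_comm, Int.modEq_iff_dvd] at h ⊢
  have hab : (p : ℤ) ∣ a - b := by
    have hpow := (dvd_pow_self (p : ℤ) k.succ_ne_zero).trans h
    rw [← ZMod.intCast_zmod_eq_zero_iff_dvd] at hpow ⊢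
    simpa only [Int.cast_sub, Int.cast_pow, ZMod.pow_card] using hpow
  rw [pow_dvd_iff_le_emultiplicity] at h ⊢
  rw [Int.emultiplicity_pow_sub_pow hp hodd hab ha, Nat.Prime.emultiplicity_self hp,
    Nat.cast_add, Nat.cast_one] at h
  exact (ENat.add_le_add_iff_right ENat.one_ne_top).1 h

theorem isUnit_coe_sub_one_of_orderOf_coprime {p k : ℕ} [hp : Fact p.Prime]
    {u : (ZMod (p ^ (k + 1)))ˣ} (hu : u ≠ 1) (hcop : (orderOf u).Coprime p) :
    IsUnit ((u : ZMod (p ^ (k + 1))) - 1) := by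
  by_contra hunit
  have hdvd : (p : ZMod (p ^ (k + 1))) ∣ u - 1 := by
    rw [← ZMod.natCast_zmod_val ((u : ZMod (p ^ (k + 1))) - 1)] at hunit ⊢
    rw [ZMod.isUnit_natCast_iff_not_dvd_pow hp.out k.succ_pos, not_not] at hunit
    exact Nat.cast_dvd_cast hunit
  have hpow : u ^ p ^ k = 1 := Units.ext <| by
    have hzero := dvd_sub_pow_of_dvd_sub hdvd k
    rwa [← Nat.cast_pow, ZMod.natCast_self, zero_dvd_iff, one_pow, sub_eq_zero] at hzero
  exact hu <| orderOf_eq_one_iff.1 <|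
    (hcop.pow_right k).eq_one_of_dvd (orderOf_dvd_iff_pow_eq_one.2 hpow)

theorem map_pow_eq_self_of_pow_eq_one {K L : Type*} [Field K] [Field L] [Algebra K L] {p k : ℕ}
    [hp : Fact p.Prime] (hodd : Odd p) {ζ : L} (hζ : IsPrimitiveRoot ζ (p ^ (k + 1)))
    {τ : Gal(L/K)} (hτ : τ ^ p = 1) : τ (ζ ^ p) = ζ ^ p := by
  set a := (hζ.autToPow K τ : ZMod (p ^ (k + 1))).val with ha
  have hζa : ζ ^ a = τ ζ := hζ.autToPow_spec K τ
  have ha_pow : a ^ p ≡ 1 ^ p [MOD p ^ (k + 1)] := by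
    rw [← ZMod.natCast_eq_natCast_iff, Nat.cast_pow, ha, ZMod.natCast_zmod_val,
      ← Units.val_pow_eq_pow_val, ← map_pow, hτ, map_one, Units.val_one, one_pow, Nat.cast_one]
  have ha_one : a ≡ 1 [MOD p ^ k] := by
    have hp_one : ¬(p : ℤ) ∣ 1 := by
      rw [Int.natCast_dvd, Int.natAbs_one, Nat.dvd_one]
      exact hp.out.ne_one
    have hpow_int : (1 : ℤ) ^ p ≡ (a : ℤ) ^ p [ZMOD p ^ (k + 1)] :=
      mod_cast (Int.natCast_modEq_iff.2 ha_pow).symm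
    exact Int.natCast_modEq_iff.1
      (mod_cast (modEq_pow_of_pow_modEq_pow_succ hp.out hodd hp_one hpow_int).symm)
  have hmul : a * p ≡ p [MOD p ^ (k + 1)] := by
    simpa only [one_mul, pow_succ] using ha_one.mul_right' p
  rw [map_pow, ← hζa, ← pow_mul]
  exact pow_eq_pow_of_modEq hmul hζ.pow_eq_one

theorem finrank_adjoin_pow_le {F L : Type*} [Field F] [Field L] [Algebra F L] {ζ : L}
    (hζ : F⟮ζ⟯ = ⊤) {n : ℕ} (hn : n ≠ 0) : Module.finrank F⟮ζ ^ n⟯ L ≤ n := by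
  have hroot : Polynomial.aeval ζ
      (Polynomial.X ^ n - Polynomial.C (AdjoinSimple.gen F (ζ ^ n))) = 0 := by simp
  have hintegral : IsIntegral F⟮ζ ^ n⟯ ζ :=
    ⟨_, Polynomial.monic_X_pow_sub_C _ hn, by rwa [← Polynomial.aeval_def]⟩
  have htop : F⟮ζ ^ n⟯⟮ζ⟯ = ⊤ := by
    rw [← restrictScalars_eq_top_iff (K := F), eq_top_iff, ← hζ, adjoin_simple_le_iff]
    exact mem_adjoin_simple_self _ ζ
  rw [← finrank_top', ← htop, adjoin.finrank hintegral]
  exact (Polynomial.natDegree_le_of_dvd (minpoly.dvd _ _ hroot)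
    (Polynomial.X_pow_sub_C_ne_zero hn.bot_lt _)).trans_eq Polynomial.natDegree_X_pow_sub_C

-- An automorphism `τ` of order `p` fixes `ζ ^ p`, and `[L : F(ζ ^ p)] ≤ p = [L : L^τ]`, so the
-- fixed field of `τ`, which contains `K`, is `F(ζ ^ p)`.
theorem algebraMap_mem_adjoin_pow_of_dvd_finrank {F K L : Type*} [Field F] [Field K] [Field L]
    [Algebra F K] [Algebra K L] [Algebra F L] [IsScalarTower F K L] [FiniteDimensional F L]
    [IsGalois K L] {p k : ℕ} [hp : Fact p.Prime] (hodd : Odd p) {ζ : L}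
    (hζ : IsPrimitiveRoot ζ (p ^ (k + 1))) (htop : F⟮ζ⟯ = ⊤) (hdvd : p ∣ Module.finrank K L)
    (x : K) : algebraMap K L x ∈ F⟮ζ ^ p⟯ := by
  have : FiniteDimensional K L := .right F K L
  rw [← IsGalois.card_aut_eq_finrank] at hdvd
  obtain ⟨τ, hτ⟩ := exists_prime_orderOf_dvd_card' p hdvd
  let E := (fixedField (Subgroup.zpowers τ)).restrictScalars F
  have hE : Module.finrank E L = p :=
    (finrank_fixedField_eq_card (Subgroup.zpowers τ)).trans ((Nat.card_zpowers τ).trans hτ)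
  have hle : F⟮ζ ^ p⟯ ≤ E := by
    rw [adjoin_simple_le_iff, mem_restrictScalars, mem_fixedField_iff]
    intro σ hσ
    refine map_pow_eq_self_of_pow_eq_one hodd hζ ?_
    rw [← orderOf_dvd_iff_pow_eq_one, ← hτ]
    exact orderOf_dvd_of_mem_zpowers hσ
  rw [eq_of_le_of_finrank_le' hle ((finrank_adjoin_pow_le htop hp.out.ne_zero).trans_eq hE.symm)]
  exact (fixedField (Subgroup.zpowers τ)).algebraMap_mem x

end Tame

section Different

open Polynomial

theorem map_minpoly_eq_prod_of_adjoin_eq_top {K L : Type*} [Field K] [Field L] [Algebra K L]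
    [FiniteDimensional K L] [IsGalois K L] {x : L} (hx : Algebra.adjoin K {x} = ⊤) :
    (minpoly K x).map (algebraMap K L) = ∏ σ : Gal(L/K), (X - C (σ x)) := by
  have hintegral : IsIntegral K x := Algebra.IsIntegral.isIntegral x
  have hinj : Function.Injective fun σ : Gal(L/K) ↦ σ x := fun σ τ hστ ↦
    AlgEquiv.coe_toAlgHom_injective <| AlgHom.ext_of_adjoin_eq_top hx fun _ hy ↦
      Set.mem_singleton_iff.1 hy ▸ hστ
  refine eq_of_monic_of_dvd_of_natDegree_le (monic_prod_X_sub_C _ _)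
    ((minpoly.monic hintegral).map _) ?_ ?_
  · refine Finset.prod_dvd_of_coprime
      (fun σ _ τ _ hne ↦ pairwise_coprime_X_sub_C hinj hne) fun σ _ ↦ ?_
    rw [dvd_iff_isRoot, IsRoot.def, eval_map_algebraMap, aeval_algHom_apply, minpoly.aeval,
      map_zero]
  · rw [natDegree_map, natDegree_finsetProd_X_sub_C_eq_card, Finset.card_univ,
      ← Nat.card_eq_fintype_card, IsGalois.card_aut_eq_finrank]
    exact minpoly.natDegree_le x

theorem aeval_derivative_minpoly_eq_prod {K L : Type*} [Field K] [Field L] [Algebra K L]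
    [FiniteDimensional K L] [IsGalois K L] [DecidableEq Gal(L/K)] {x : L}
    (hx : Algebra.adjoin K {x} = ⊤) :
    aeval x (derivative (minpoly K x)) = ∏ σ ∈ Finset.univ.erase (1 : Gal(L/K)), (x - σ x) := by
  rw [← eval_map_algebraMap, ← derivative_map, map_minpoly_eq_prod_of_adjoin_eq_top hx,
    ← Finset.mul_prod_erase _ _ (Finset.mem_univ (1 : Gal(L/K)))]
  simp [derivative_mul, eval_prod]

theorem exists_mem_differentIdeal_coe_eq_prod (K : Type*) {L : Type*} [Field K] [Field L]
    [NumberField K] [NumberField L] [Algebra K L] [IsGalois K L] [DecidableEq Gal(L/K)] {z : 𝓞 L}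
    (hz : Algebra.adjoin K {(z : L)} = ⊤) :
    ∃ w ∈ differentIdeal (𝓞 K) (𝓞 L),
      (w : L) = ∏ σ ∈ Finset.univ.erase (1 : Gal(L/K)), ((z : L) - σ z) := by
  refine ⟨_, aeval_derivative_mem_differentIdeal (𝓞 K) K L z hz, ?_⟩
  rw [← aeval_derivative_minpoly_eq_prod hz, minpoly.isIntegrallyClosed_eq_field_fractions K L
    (Algebra.IsIntegral.isIntegral (R := 𝓞 K) z), derivative_map, aeval_map_algebraMap,
    aeval_algebraMap_apply]

theorem abs_norm_sub_pow_val {L : Type*} [Field L] [NumberField L] {p k : ℕ} [hp : Fact p.Prime]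
    (hodd : Odd p) [IsCyclotomicExtension {p ^ (k + 1)} ℚ L] {ζ : L}
    (hζ : IsPrimitiveRoot ζ (p ^ (k + 1))) {a : ZMod (p ^ (k + 1))} (ha : IsUnit (a - 1)) :
    |Algebra.norm ℚ (ζ - ζ ^ a.val)| = p := by
  have hirr := cyclotomic.irreducible_rat (pow_pos hp.out.pos (k + 1))
  have hroot : IsPrimitiveRoot (ζ ^ (a - 1).val) (p ^ (k + 1)) :=
    hζ.pow_of_coprime _ (ha.unit_spec ▸ ZMod.val_coe_unit_coprime ha.unit)
  have hpow : ζ ^ a.val = ζ * ζ ^ (a - 1).val := by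
    rw [← pow_succ']
    refine pow_eq_pow_of_modEq ?_ hζ.pow_eq_one
    rw [← ZMod.natCast_eq_natCast_iff, Nat.cast_add, ZMod.natCast_zmod_val, ZMod.natCast_zmod_val,
      Nat.cast_one, sub_add_cancel]
  have hp_ne : p ≠ 2 := by
    rintro rfl
    exact absurd hodd (by decide)
  have hfactor : ζ ^ a.val - ζ = ζ * (ζ ^ (a - 1).val - 1) := by rw [hpow, mul_sub_one]
  have hnorm : Algebra.norm ℚ (ζ ^ a.val - ζ) = p := by
    rw [hfactor, map_mul, hζ.norm_eq_one_of_linearly_ordered hodd.pow, one_mul,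
      hroot.norm_sub_one_of_prime_ne_two hirr hp_ne]
  have hneg_one : |Algebra.norm ℚ (-1 : L)| = 1 := by
    rw [← pow_eq_one_iff_of_nonneg (abs_nonneg _) two_ne_zero, ← abs_pow, ← map_pow, neg_one_sq,
      map_one, abs_one]
  rw [← neg_sub, ← neg_one_mul, map_mul, abs_mul, hneg_one, hnorm, Nat.abs_cast, one_mul]

variable {K L : Type*} [Field K] [Field L] [NumberField K] [NumberField L] [Algebra K L]
  [IsGalois K L] {p k : ℕ} [hp : Fact p.Prime] [IsCyclotomicExtension {p ^ (k + 1)} ℚ L]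

theorem isUnit_autToPow_sub_one (hdvd : ¬p ∣ Module.finrank K L) {ζ : L}
    (hζ : IsPrimitiveRoot ζ (p ^ (k + 1))) {σ : Gal(L/K)} (hσ : σ ≠ 1) :
    IsUnit ((hζ.autToPow K σ : ZMod (p ^ (k + 1))) - 1) := by
  have := isCyclotomicExtension_of_isScalarTower {p ^ (k + 1)} ℚ K L
  have hinj := hζ.autToPow_injective K
  refine isUnit_coe_sub_one_of_orderOf_coprime ((map_ne_one_iff _ hinj).2 hσ) ?_
  rw [orderOf_injective _ hinj]
  refine Nat.Coprime.coprime_dvd_left (orderOf_dvd_natCard σ) ?_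
  rw [IsGalois.card_aut_eq_finrank]
  exact ((hp.out.coprime_iff_not_dvd).2 hdvd).symm

theorem absNorm_differentIdeal_dvd (hodd : Odd p) (hdvd : ¬p ∣ Module.finrank K L) {ζ : L}
    (hζ : IsPrimitiveRoot ζ (p ^ (k + 1))) :
    Ideal.absNorm (differentIdeal (𝓞 K) (𝓞 L)) ∣ p ^ (Module.finrank K L - 1) := by
  classical
  have := isCyclotomicExtension_of_isScalarTower {p ^ (k + 1)} ℚ K L
  obtain ⟨w, hw, hw_eq⟩ := exists_mem_differentIdeal_coe_eq_prod K (z := hζ.toInteger)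
    (IsCyclotomicExtension.adjoin_primitive_root_eq_top hζ)
  have hcoe : ((hζ.toInteger : 𝓞 L) : L) = ζ := hζ.coe_toInteger
  rw [hcoe] at hw_eq
  have hfactor : ∀ σ ∈ Finset.univ.erase (1 : Gal(L/K)), |Algebra.norm ℚ (ζ - σ ζ)| = p := by
    intro σ hσ
    rw [← hζ.autToPow_spec K σ]
    exact abs_norm_sub_pow_val hodd hζ (isUnit_autToPow_sub_one hdvd hζ (Finset.ne_of_mem_erase hσ))
  have hnorm : (Algebra.norm ℤ w).natAbs = p ^ (Module.finrank K L - 1) := by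
    have hcard : (Finset.univ.erase (1 : Gal(L/K))).card = Module.finrank K L - 1 := by
      rw [Finset.card_erase_of_mem (Finset.mem_univ _), Finset.card_univ,
        ← Nat.card_eq_fintype_card, IsGalois.card_aut_eq_finrank]
    rw [← Nat.cast_inj (R := ℚ), Nat.cast_natAbs, Int.cast_abs, Algebra.coe_norm_int, hw_eq,
      map_prod, Finset.abs_prod, Nat.cast_pow, ← hcard]
    exact Finset.prod_eq_pow_card hfactor
  rw [← hnorm, ← Ideal.absNorm_span_singleton]
  exact Ideal.absNorm_dvd_absNorm_of_le ((Ideal.span_singleton_le_iff_mem _).2 hw)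

theorem pow_le_pow_mul_natAbs_discr_pow (hodd : Odd p) (hdvd : ¬p ∣ Module.finrank K L) :
    p ^ (p ^ k * ((p - 1) * (k + 1) - 1)) ≤
      p ^ (Module.finrank K L - 1) * (discr K).natAbs ^ Module.finrank K L := by
  have hdiscr : (discr L).natAbs = p ^ (p ^ k * ((p - 1) * (k + 1) - 1)) := by
    rw [IsCyclotomicExtension.Rat.discr_prime_pow_succ p k L, Int.natAbs_mul, Int.natAbs_pow,
      Int.natAbs_pow, Int.natAbs_neg, Int.natAbs_one, one_pow, one_mul, Int.natAbs_natCast]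
  rw [← hdiscr,
    natAbs_discr_eq_absNorm_differentIdeal_mul_natAbs_discr_pow K (𝓞 K) L (𝓞 L)]
  exact Nat.mul_le_mul_right _ (Nat.le_of_dvd (pow_pos hp.out.pos _)
    (absNorm_differentIdeal_dvd hodd hdvd
      (IsCyclotomicExtension.zeta_spec (p ^ (k + 1)) ℚ L)))

end Different

section Numerics

theorem sq_nine_mul_sq_sub_one_div_le_sq {p : ℝ} (hp : 3 ≤ p) :
    (9 * ((p ^ 2 - 1) / 12 / (p - 1))) ^ 2 ≤ p ^ 2 := by
  have hp_sub : 0 < p - 1 := by linarith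
  have hsimp : 9 * ((p ^ 2 - 1) / 12 / (p - 1)) = 3 * (p + 1) / 4 := by
    field_simp
    ring
  rw [hsimp]
  gcongr
  linarith

theorem sq_nine_mul_sq_sub_one_div_le {p q : ℝ} (hp : 3 ≤ p) (hq : 1 ≤ q) :
    (9 * (((q * p) ^ 2 - 1) / 12 / (q * (p - 1)))) ^ 2 ≤ p * (q * p) ^ 2 := by
  have hp_sub : 0 < p - 1 := by linarith
  have hqp : 0 ≤ (q * p) ^ 2 - 1 := sub_nonneg.2 (one_le_pow₀ (by nlinarith))
  have hbase : 9 * (((q * p) ^ 2 - 1) / 12 / (q * (p - 1))) ≤ 9 / 8 * (q * p) := by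
    rw [div_div, ← mul_div_assoc, div_le_iff₀ (by positivity)]
    nlinarith [mul_nonneg (sq_nonneg q) (mul_nonneg (by linarith : 0 ≤ p) (sub_nonneg.2 hp))]
  calc (9 * (((q * p) ^ 2 - 1) / 12 / (q * (p - 1)))) ^ 2 ≤ (9 / 8 * (q * p)) ^ 2 := by gcongr
    _ = 81 / 64 * (q * p) ^ 2 := by ring
    _ ≤ p * (q * p) ^ 2 := by gcongr; linarith

theorem exponent_le_of_ne_zero {p k m : ℕ} (hp : 3 ≤ p) (hk : k ≠ 0) (hm : m ≤ p - 1) :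
    (2 * k + 3) * (p ^ k * (p - 1)) + 4 * (m - 1) ≤ 4 * (p ^ k * ((p - 1) * (k + 1) - 1)) := by
  obtain ⟨t, rfl⟩ : ∃ t, p = t + 3 := ⟨p - 3, by lia⟩
  obtain ⟨j, rfl⟩ := Nat.exists_eq_succ_of_ne_zero hk
  have hle : t + 3 ≤ (t + 3) ^ (j + 1) := Nat.le_self_pow hk _
  have hm' : m - 1 ≤ t + 1 := by lia
  have hsub : (t + 3 - 1) * (j + 1 + 1) - 1 = 2 * j + t * j + 2 * t + 3 := by
    rw [show t + 3 - 1 = t + 2 by rfl,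
      show (t + 2) * (j + 1 + 1) = 2 * j + t * j + 2 * t + 3 + 1 by ring, Nat.add_sub_cancel]
  rw [hsub, show t + 3 - 1 = t + 2 by rfl, Nat.succ_eq_add_one]
  generalize (t + 3) ^ (j + 1) = q at hle ⊢
  nlinarith [Nat.zero_le (q * (t * j)), Nat.zero_le (q * j), Nat.mul_le_mul_right t hle]

theorem pow_le_sq_of_sq_le_pow {p b D : ℝ} {s e m n : ℕ} (hp : 1 ≤ p) (hm : m ≠ 0)
    (hb : b ^ 2 ≤ p ^ s) (hdiscr : p ^ e ≤ p ^ (m - 1) * D ^ m)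
    (hexp : s * (n * m) + 4 * (m - 1) ≤ 4 * e) : b ^ n ≤ D ^ 2 := by
  have hpow : p ^ (4 * (m - 1)) * (b ^ n) ^ (m * 2) ≤ p ^ (4 * (m - 1)) * (D ^ 2) ^ (m * 2) :=
    calc p ^ (4 * (m - 1)) * (b ^ n) ^ (m * 2)
        = p ^ (4 * (m - 1)) * (b ^ 2) ^ (n * m) := by ring
      _ ≤ p ^ (4 * (m - 1)) * (p ^ s) ^ (n * m) := by gcongr
      _ = p ^ (s * (n * m) + 4 * (m - 1)) := by ring
      _ ≤ p ^ (4 * e) := pow_le_pow_right₀ hp hexp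
      _ = (p ^ e) ^ 4 := by ring
      _ ≤ (p ^ (m - 1) * D ^ m) ^ 4 := by gcongr
      _ = p ^ (4 * (m - 1)) * (D ^ 2) ^ (m * 2) := by ring
  exact le_of_pow_le_pow_left₀ (mul_ne_zero hm two_ne_zero) (sq_nonneg D)
    (le_of_mul_le_mul_left hpow (by positivity))

theorem sqrt_pow_le_of_nine_mul_pow_le_sq {b D : ℝ} {n : ℕ} (hD : 0 ≤ D)
    (h : (9 * b) ^ n ≤ D ^ 2) : √(b ^ n) ≤ (1 / 3) ^ n * D := by
  refine Real.sqrt_le_iff.2 ⟨by positivity, ?_⟩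
  calc b ^ n = (1 / 9) ^ n * (9 * b) ^ n := by
        rw [← mul_pow, ← mul_assoc, one_div_mul_cancel (by norm_num), one_mul]
    _ ≤ (1 / 9) ^ n * D ^ 2 := by gcongr
    _ = ((1 / 3) ^ n * D) ^ 2 := by rw [mul_pow, pow_right_comm]; norm_num

end Numerics

section Conductor

theorem HasConductor.isEmpty_algHom {K : Type*} [Field K] [NumberField K] {f : ℕ+}
    (hK : HasConductor K f) {m : ℕ} [NeZero m] (hm : m < f) (F : Type*) [Field F] [Algebra ℚ F]
    [IsCyclotomicExtension {m} ℚ F] : IsEmpty (K →ₐ[ℚ] F) := by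
  have : IsCyclotomicExtension {m} ℚ (CyclotomicField m ℚ) :=
    CyclotomicField.isCyclotomicExtension m ℚ
  let e := IsCyclotomicExtension.algEquiv {m} ℚ F (CyclotomicField m ℚ)
  exact ⟨fun ψ ↦ hm.not_ge (hK.2 ⟨m, NeZero.pos m⟩ ⟨e.toAlgHom.comp ψ⟩)⟩

theorem HasConductor.finrank_ne_one {K : Type*} [Field K] [NumberField K] {f : ℕ+}
    (hK : HasConductor K f) (hf : 1 < f) : Module.finrank ℚ K ≠ 1 := fun h ↦
  have := IsCyclotomicExtension.singleton_one_of_algebraMap_bijective (A := ℚ) (B := ℚ)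
    Function.surjective_id
  have ⟨e⟩ := Module.nonempty_algEquiv_iff_finrank_eq_one.2 h
  (hK.isEmpty_algHom (m := 1) hf ℚ).false e.symm.toAlgHom

variable {K L : Type*} [Field K] [NumberField K] [Field L] [NumberField L] [Algebra K L]
  {p k : ℕ} [hp : Fact p.Prime] [IsCyclotomicExtension {p ^ (k + 1)} ℚ L]

theorem HasConductor.not_dvd_finrank (hodd : Odd p)
    (hK : HasConductor K ⟨p ^ (k + 1), pow_pos hp.out.pos _⟩) : ¬p ∣ Module.finrank K L := by
  intro hdvd
  have hζ := IsCyclotomicExtension.zeta_spec (p ^ (k + 1)) ℚ L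
  set ζ := IsCyclotomicExtension.zeta (p ^ (k + 1)) ℚ L
  have := IsCyclotomicExtension.isGalois {p ^ (k + 1)} ℚ L
  have : IsGalois K L := .tower_top_of_isGalois ℚ K L
  have hζp : IsPrimitiveRoot (ζ ^ p) (p ^ k) := hζ.pow (pow_pos hp.out.pos _) (pow_succ' p k)
  have : IsCyclotomicExtension {p ^ k} ℚ (IntermediateField.adjoin ℚ {ζ ^ p}) :=
    hζp.intermediateField_adjoin_isCyclotomicExtension ℚ
  have htop : IntermediateField.adjoin ℚ {ζ} = ⊤ :=
    IntermediateField.adjoin_eq_top_of_algebra _ _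
      (IsCyclotomicExtension.adjoin_primitive_root_eq_top hζ)
  refine (hK.isEmpty_algHom (Nat.pow_lt_pow_right hp.out.one_lt k.lt_succ_self)
    (IntermediateField.adjoin ℚ {ζ ^ p})).false ?_
  exact (IsScalarTower.toAlgHom ℚ K L).codRestrict _
    (algebraMap_mem_adjoin_pow_of_dvd_finrank hodd hζ htop hdvd)

end Conductor

section Bound

theorem exists_sq_le_pow_and_exponent_le {p k m n : ℕ} (hp : 3 ≤ p)
    (hnm : n * m = p ^ k * (p - 1)) (hm : m ∣ p - 1) (hn : k = 0 → n ≠ 1) :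
    ∃ s : ℕ, (9 * ((((p ^ (k + 1) : ℕ) : ℝ) ^ 2 - 1) / 12 / (p ^ k * (p - 1) : ℕ))) ^ 2 ≤ p ^ s ∧
      s * (n * m) + 4 * (m - 1) ≤ 4 * (p ^ k * ((p - 1) * (k + 1) - 1)) := by
  have hp' : (3 : ℝ) ≤ p := by exact_mod_cast hp
  have hcast : ((p ^ k * (p - 1) : ℕ) : ℝ) = p ^ k * (p - 1) := by
    rw [Nat.cast_mul, Nat.cast_pow, Nat.cast_pred (by lia)]
  rw [hnm, hcast, Nat.cast_pow]
  rcases eq_or_ne k 0 with rfl | hk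
  · have htwo : 2 * m ≤ p - 1 := by
      have hn_pos : n ≠ 0 := by
        rintro rfl
        lia
      have hle := Nat.mul_le_mul_right m ((Nat.two_le_iff n).2 ⟨hn_pos, hn rfl⟩)
      rwa [hnm, pow_zero, one_mul] at hle
    simp only [zero_add, pow_zero, pow_one, one_mul, mul_one]
    exact ⟨2, sq_nine_mul_sq_sub_one_div_le_sq hp', by lia⟩
  · refine ⟨2 * k + 3, ?_, exponent_le_of_ne_zero hp hk (Nat.le_of_dvd (by lia) hm)⟩
    rw [pow_succ]
    exact (sq_nine_mul_sq_sub_one_div_le hp' (one_le_pow₀ (by linarith))).trans_eq (by ring)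

variable {K : Type*} [Field K] [NumberField K] (L : Type*) [Field L] [NumberField L] [Algebra K L]
  {p k : ℕ} [hp : Fact p.Prime] [IsCyclotomicExtension {p ^ (k + 1)} ℚ L]

theorem sqrt_pow_le_of_not_dvd_finrank (hodd : Odd p) (hdvd : ¬p ∣ Module.finrank K L)
    (hn : k = 0 → Module.finrank ℚ K ≠ 1) :
    √(((((p ^ (k + 1) : ℕ) : ℝ) ^ 2 - 1) / 12 / Module.finrank ℚ L) ^ Module.finrank ℚ K) ≤
      (1 / 3) ^ Module.finrank ℚ K * |(discr K : ℝ)| := by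
  have := IsCyclotomicExtension.isGalois {p ^ (k + 1)} ℚ L
  have : IsGalois K L := .tower_top_of_isGalois ℚ K L
  have hp_three : 3 ≤ p := by
    have := hp.out.two_le
    obtain ⟨j, rfl⟩ := hodd
    lia
  have hdegL : Module.finrank ℚ L = p ^ k * (p - 1) := by
    rw [IsCyclotomicExtension.finrank L
      (Polynomial.cyclotomic.irreducible_rat (pow_pos hp.out.pos (k + 1))),
      Nat.totient_prime_pow_succ hp.out]
  have hmul : Module.finrank ℚ K * Module.finrank K L = p ^ k * (p - 1) :=
    hdegL ▸ Module.finrank_mul_finrank ℚ K L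
  have hm : Module.finrank K L ∣ p - 1 :=
    (((hp.out.coprime_iff_not_dvd).2 hdvd).symm.pow_right k).dvd_of_dvd_mul_left
      (Dvd.intro_left _ hmul)
  obtain ⟨s, hs, hexp⟩ := exists_sq_le_pow_and_exponent_le hp_three hmul hm hn
  have hdiscr : (p : ℝ) ^ (p ^ k * ((p - 1) * (k + 1) - 1)) ≤
      p ^ (Module.finrank K L - 1) * |(discr K : ℝ)| ^ Module.finrank K L := by
    rw [← Int.cast_abs, ← Nat.cast_natAbs]
    exact_mod_cast pow_le_pow_mul_natAbs_discr_pow hodd hdvd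
  rw [hdegL]
  exact sqrt_pow_le_of_nine_mul_pow_le_sq (abs_nonneg _) <|
    pow_le_sq_of_sq_le_pow (by exact_mod_cast hp.out.one_le) Module.finrank_pos.ne' hs hdiscr hexp

end Bound

theorem euclideanMinimum_le_of_oddPrimePower_conductor
    (p r : ℕ) (hp : p.Prime) (hodd : Odd p) (hr : 1 ≤ r)
    (K : Type*) [Field K] [NumberField K]
    (hcond : HasConductor K ⟨p ^ r, pow_pos hp.pos r⟩) :
    euclideanMinimum K ≤
      ((1 : ℝ) / 3) ^ (Module.finrank ℚ K) * |(NumberField.discr K : ℝ)| := by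
  have : Fact p.Prime := ⟨hp⟩
  obtain ⟨k, rfl⟩ := Nat.exists_eq_add_of_le' hr
  have hN : 1 < p ^ (k + 1) := Nat.one_lt_pow k.succ_ne_zero hp.one_lt
  let L := CyclotomicField (p ^ (k + 1)) ℚ
  have : IsCyclotomicExtension {p ^ (k + 1)} ℚ L := CyclotomicField.isCyclotomicExtension _ ℚ
  obtain ⟨φ : K →ₐ[ℚ] L⟩ := hcond.1
  let : Algebra K L := φ.toRingHom.toAlgebra
  exact (euclideanMinimum_le_sqrt_of_isCyclotomicExtension L hN).trans <|
    sqrt_pow_le_of_not_dvd_finrank L hodd (hcond.not_dvd_finrank hodd)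
      fun _ ↦ hcond.finrank_ne_one hN
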